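/- (Evaluation at the escape point.) One has ₂F₁(1/3, 2/3; 1; (3√3/4)·(√3 − 1)) = (3√3/2)^{1/4} · (√(√3 + 1) / (2π)^{3/2}) · Γ(1/4)², where Γ is the Gamma function. (The argument (3√3/4)(√3 − 1) ≈ 0.951 lies in (0,1), so the hypergeometric series converges absolutely.) -/

import Mathlib

open Real

/-- Gauss hypergeometric function ₂F₁ defined via its power series
    (the tsum; converges absolutely for |z| < 1). -/
noncomputable def hyp2F1 (a b c z : ℝ) : ℝ :=
  ∑' n : ℕ, ((ascPochhammer ℝ n).eval a * (ascPochhammer ℝ n).eval b /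
      (ascPochhammer ℝ n).eval c) * z ^ n / (Nat.factorial n)

structure HypSeq (k : ℝ) (c : ℕ → ℝ) : Prop where
  k_pos : 0 < k
  k_le : k ≤ 1
  zero : c 0 = 1
  recur : ∀ n : ℕ, ((n : ℝ) + 1) ^ 2 * c (n + 1) = ((n : ℝ) ^ 2 + n + k) * c n

lemma HypSeq.bound {k : ℝ} {c : ℕ → ℝ} (h : HypSeq k c) (n : ℕ) : 0 < c n ∧ c n ≤ 1 := by
  induction n with
  | zero => simp [h.zero]
  | succ n ih =>
    have hk := h.k_pos
    have hk1 := h.k_le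
    have e : c (n + 1) = ((n : ℝ) ^ 2 + n + k) / ((n : ℝ) + 1) ^ 2 * c n := by
      have := h.recur n
      field_simp
      linarith
    have h1 : ((n : ℝ) ^ 2 + n + k) / ((n : ℝ) + 1) ^ 2 ≤ 1 := by
      rw [div_le_one (by positivity)]
      nlinarith [(Nat.cast_nonneg n : (0 : ℝ) ≤ n)]
    have h0 : 0 < ((n : ℝ) ^ 2 + n + k) / ((n : ℝ) + 1) ^ 2 := by positivity
    rw [e]
    exact ⟨mul_pos h0 ih.1, mul_le_one₀ h1 ih.1.le ih.2⟩

lemma summable_of_bdd {c : ℕ → ℝ} (hc : ∀ n, |c n| ≤ 1) {x : ℝ} (hx : |x| < 1) :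
    Summable fun n => c n * x ^ n := by
  refine Summable.of_norm_bounded (g := fun n => |x| ^ n)
    (summable_geometric_of_lt_one (abs_nonneg _) hx) fun n => ?_
  rw [norm_mul, norm_pow]
  simp only [Real.norm_eq_abs]
  exact mul_le_of_le_one_left (by positivity) (hc n)

lemma summable_deriv_of_bdd {c : ℕ → ℝ} (hc : ∀ n, |c n| ≤ 1) {x : ℝ} (hx : |x| < 1) :
    Summable fun n : ℕ => ((n : ℝ) * c n) * x ^ n := by
  have := summable_pow_mul_geometric_of_norm_lt_one 1 (r := |x|) (by simpa using hx)
  refine Summable.of_norm_bounded this fun n => ?_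
  rw [norm_mul, norm_pow, norm_mul]
  simp only [Real.norm_eq_abs, pow_one, Nat.abs_cast]
  gcongr
  exact mul_le_of_le_one_right (by positivity) (hc n)

lemma hasDerivAt_series {c : ℕ → ℝ} (hc : ∀ n, |c n| ≤ 1) {x : ℝ} (hx : |x| < 1) :
    HasDerivAt (fun y => ∑' n, c n * y ^ n) (∑' n : ℕ, ((n : ℝ) + 1) * c (n + 1) * x ^ n) x := by
  obtain ⟨r, hr, hr1⟩ := exists_between hx
  have hr0 : 0 < r := (abs_nonneg x).trans_lt hr
  have hu : Summable fun n : ℕ => (n : ℝ) * r ^ (n - 1) := by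
    have := (summable_pow_mul_geometric_of_norm_lt_one 1 (r := r)
      (by simpa [abs_of_pos hr0] using hr1)).mul_left r⁻¹
    refine this.congr fun n => ?_
    rcases n with _ | n
    · simp
    · simp [pow_succ]; field_simp
  have key := hasDerivAt_tsum_of_isPreconnected (g := fun n y => c n * y ^ n)
    (g' := fun n y => c n * ((n : ℝ) * y ^ (n - 1))) (t := Metric.ball 0 r) (y₀ := 0) (y := x)
    hu Metric.isOpen_ball (convex_ball _ _).isPreconnected
    (fun n y _ => (hasDerivAt_pow n y).const_mul (c n))
    (fun n y hy => by
      have hy' : |y| < r := by simpa using hy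
      rw [norm_mul, norm_mul, norm_pow]
      simp only [Real.norm_eq_abs, Nat.abs_cast]
      calc |c n| * (n * |y| ^ (n - 1)) ≤ n * |y| ^ (n - 1) :=
            mul_le_of_le_one_left (by positivity) (hc n)
        _ ≤ _ := by gcongr)
    (by simpa using hr0) (summable_of_bdd hc (by simp)) (by simpa using hr)
  have hs : Summable fun n : ℕ => c n * ((n : ℝ) * x ^ (n - 1)) := by
    refine Summable.of_norm_bounded hu fun n => ?_
    rw [norm_mul, norm_mul, norm_pow]
    simp only [Real.norm_eq_abs, Nat.abs_cast]
    calc |c n| * (n * |x| ^ (n - 1)) ≤ n * |x| ^ (n - 1) :=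
            mul_le_of_le_one_left (by positivity) (hc n)
        _ ≤ _ := by gcongr
  have e0 : ∑' n : ℕ, ((n : ℝ) + 1) * c (n + 1) * x ^ n
      = ∑' n : ℕ, c n * ((n : ℝ) * x ^ (n - 1)) := by
    rw [hs.tsum_eq_zero_add]
    simp only [Nat.cast_zero, zero_mul, mul_zero, zero_add, Nat.add_sub_cancel]
    exact tsum_congr fun n => by push_cast; ring
  rw [e0]
  exact key

/-- The sum of the series, its derivative, and the flux. -/
lemma HypSeq.main {k : ℝ} {c : ℕ → ℝ} (h : HypSeq k c) :
    ∃ F D : ℝ → ℝ, (∀ x, F x = ∑' n, c n * x ^ n) ∧ F 0 = 1 ∧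
      (∀ x, 0 ≤ x → x < 1 → 1 ≤ F x) ∧
      (∀ x, |x| < 1 → HasDerivAt F (D x) x) ∧
      (∀ x, |x| < 1 → HasDerivAt (fun y => y * (1 - y) * D y) (k * F x) x) := by
  have hc : ∀ n, |c n| ≤ 1 := fun n => by
    rw [abs_of_pos (h.bound n).1]; exact (h.bound n).2
  refine ⟨fun x => ∑' n, c n * x ^ n, fun x => ∑' n : ℕ, ((n : ℝ) + 1) * c (n + 1) * x ^ n,
    fun x => rfl, ?_, ?_, fun x hx => hasDerivAt_series hc hx, ?_⟩
  · simp only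
    rw [tsum_eq_single 0]
    · simp [h.zero]
    · intro n hn; simp [hn]
  · intro x hx0 hx1
    have hs := summable_of_bdd hc (x := x) (by rwa [abs_of_nonneg hx0])
    have := hs.le_tsum 0 (fun n _ => mul_nonneg (h.bound n).1.le (by positivity))
    simpa [h.zero] using this
  · intro x hx
    let e : ℕ → ℝ := fun n => match n with
      | 0 => 0
      | n + 1 => k * c n / (n + 1)
    have he : ∀ n, |e n| ≤ 1 := by
      intro n
      rcases n with _ | n
      · simp [e]
      · have h1 := (h.bound n).1
        have h2 := (h.bound n).2
        have h3 := h.k_pos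
        have h4 := h.k_le
        simp only [e]
        rw [abs_of_nonneg (by positivity), div_le_one (by positivity)]
        have : (0 : ℝ) ≤ n := Nat.cast_nonneg n
        nlinarith
    have key := hasDerivAt_series he hx
    have e1 : (∑' n : ℕ, ((n : ℝ) + 1) * e (n + 1) * x ^ n) = k * ∑' n, c n * x ^ n := by
      rw [← tsum_mul_left]
      refine tsum_congr fun n => ?_
      simp only [e]
      field_simp
    rw [e1] at key
    refine key.congr_of_eventuallyEq ?_
    have : ∀ᶠ y in nhds x, |y| < 1 := (continuous_abs.tendsto x).eventually (gt_mem_nhds hx)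
    filter_upwards [this] with y hy
    have s1 := summable_deriv_of_bdd hc hy
    have s2 := summable_of_bdd he hy
    have s3 := (summable_nat_add_iff 1).2 s1
    rw [s2.tsum_eq_zero_add]
    have e2 : y * (∑' n : ℕ, ((n : ℝ) + 1) * c (n + 1) * y ^ n)
        = ∑' n : ℕ, (((n + 1 : ℕ) : ℝ) * c (n + 1)) * y ^ (n + 1) := by
      rw [← tsum_mul_left]
      exact tsum_congr fun n => by push_cast; ring
    have e3 : ∑' n : ℕ, ((n : ℝ) * c n) * y ^ n
        = ∑' n : ℕ, (((n + 1 : ℕ) : ℝ) * c (n + 1)) * y ^ (n + 1) := by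
      rw [s1.tsum_eq_zero_add]; simp
    have e4 : ∑' n : ℕ, e (n + 1) * y ^ (n + 1)
        = ∑' n : ℕ, (((n + 1 : ℕ) : ℝ) * c (n + 1)) * y ^ (n + 1)
          - y * ∑' n : ℕ, ((n : ℝ) * c n) * y ^ n := by
      rw [← tsum_mul_left, ← s3.tsum_sub (s1.mul_left y)]
      refine tsum_congr fun n => ?_
      have := h.recur n
      have h5 : e (n + 1) = ((n : ℝ) + 1) * c (n + 1) - n * c n := by
        simp only [e]
        field_simp
        linarith
      rw [h5]
      push_cast
      ring
    rw [e4, e3, ← e2]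
    simp [e]
    ring

lemma cast_hyp (a b : ℝ) (ha : 0 < a) (hb : 0 < b) (hab : a + b = 1) :
    ∃ c, HypSeq (a * b) c ∧ (∀ x, hyp2F1 a b 1 x = ∑' n, c n * x ^ n) ∧
      ∀ n, c n = (ascPochhammer ℝ n).eval a * (ascPochhammer ℝ n).eval b /
      (n.factorial : ℝ) ^ 2 := by
  refine ⟨_, ⟨by positivity, by nlinarith, by simp, ?_⟩, ?_, fun n => rfl⟩
  · intro n
    simp only [ascPochhammer_succ_eval, Nat.factorial_succ]
    have : (n.factorial : ℝ) ≠ 0 := by positivity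
    push_cast
    field_simp
    obtain rfl : b = 1 - a := by linarith
    ring
  · intro x
    unfold hyp2F1
    refine tsum_congr fun n => ?_
    rw [ascPochhammer_eval_one]
    have : (n.factorial : ℝ) ≠ 0 := by positivity
    field_simp

lemma transform_aux {F D F3 D3 : ℝ → ℝ} (h0 : F 0 = 1) (h0' : F3 0 = 1)
    (hpos : ∀ x, 0 ≤ x → x < 1 → 1 ≤ F x)
    (hF : ∀ x, |x| < 1 → HasDerivAt F (D x) x)
    (hQ : ∀ x, |x| < 1 → HasDerivAt (fun y => y * (1 - y) * D y) (1 / 4 * F x) x)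
    (hF3 : ∀ x, |x| < 1 → HasDerivAt F3 (D3 x) x)
    (hQ3 : ∀ x, |x| < 1 → HasDerivAt (fun y => y * (1 - y) * D3 y) (2 / 9 * F3 x) x)
    {p : ℝ} (hp0 : 0 < p) (hp1 : p < 1) :
    (1 + p + p ^ 2) * F (p ^ 3 * (2 + p) / (1 + 2 * p)) =
      √(1 + 2 * p) * F3 (27 * p ^ 2 * (1 + p) ^ 2 / (4 * (1 + p + p ^ 2) ^ 3)) := by
  set al : ℝ → ℝ := fun p => p ^ 3 * (2 + p) / (1 + 2 * p) with hal
  set be : ℝ → ℝ := fun p => 27 * p ^ 2 * (1 + p) ^ 2 / (4 * (1 + p + p ^ 2) ^ 3) with hbe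
  set u : ℝ → ℝ := fun p => √(1 + 2 * p) / (1 + p + p ^ 2) with hu
  have al_d : ∀ x, 0 ≤ x → HasDerivAt al (6 * x ^ 2 * (1 + x) ^ 2 / (1 + 2 * x) ^ 2) x := by
    intro x hx
    have h1 : (1 + 2 * x) ≠ 0 := by positivity
    have := (((hasDerivAt_id x).pow 3).mul ((hasDerivAt_id x).const_add 2)).div
      (((hasDerivAt_id x).const_mul 2).const_add 1) h1
    refine HasDerivAt.congr_deriv this ?_
    simp
    field_simp
    ring
  have be_d : ∀ x, 0 ≤ x → HasDerivAt be
      (27 * x * (1 + x) * (1 + 2 * x) * (1 - x) * (2 + x) / (4 * (1 + x + x ^ 2) ^ 4)) x := by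
    intro x hx
    have h1 : (4 * (1 + x + x ^ 2) ^ 3) ≠ 0 := by positivity
    have := ((((hasDerivAt_id x).pow 2).const_mul 27).mul
      (((hasDerivAt_id x).const_add 1).pow 2)).div
      (((((hasDerivAt_id x).const_add 1).add ((hasDerivAt_id x).pow 2)).pow 3).const_mul 4) h1
    refine HasDerivAt.congr_deriv this ?_
    simp
    field_simp
    ring
  have u_d : ∀ x, 0 ≤ x → HasDerivAt u
      (-(3 * x * (1 + x)) / ((1 + 2 * x) * (1 + x + x ^ 2)) * u x) x := by
    intro x hx
    have h1 : (1 + 2 * x) ≠ 0 := by positivity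
    have h2 : (1 + x + x ^ 2) ≠ 0 := by positivity
    have := (((((hasDerivAt_id x).const_mul 2).const_add 1).sqrt h1)).div
      (((hasDerivAt_id x).const_add 1).add ((hasDerivAt_id x).pow 2)) h2
    refine HasDerivAt.congr_deriv this ?_
    have h3 : √(1 + 2 * x) ≠ 0 := by positivity
    have h4 : √(1 + 2 * x) ^ 2 = 1 + 2 * x := Real.sq_sqrt (by positivity)
    simp [hu]
    field_simp
    rw [h4]
    ring
  have al_b : ∀ x, 0 ≤ x → x < 1 → 0 ≤ al x ∧ al x < 1 := by
    intro x hx hx1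
    refine ⟨by simp only [hal]; positivity, ?_⟩
    simp only [hal]
    rw [div_lt_one (by positivity)]
    have : 0 < (1 - x) * (1 + x) ^ 3 := mul_pos (by linarith) (by positivity)
    nlinarith
  have be_b : ∀ x, 0 ≤ x → x < 1 → 0 ≤ be x ∧ be x < 1 := by
    intro x hx hx1
    refine ⟨by simp only [hbe]; positivity, ?_⟩
    simp only [hbe]
    rw [div_lt_one (by positivity)]
    have : 0 < ((1 - x) * (2 + x) * (1 + 2 * x)) ^ 2 :=
      pow_pos (mul_pos (mul_pos (by linarith) (by positivity)) (by positivity)) _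
    nlinarith
  have al_a : ∀ x, 0 ≤ x → x < 1 → |al x| < 1 := fun x h1 h2 => by
    rw [abs_of_nonneg (al_b x h1 h2).1]; exact (al_b x h1 h2).2
  have be_a : ∀ x, 0 ≤ x → x < 1 → |be x| < 1 := fun x h1 h2 => by
    rw [abs_of_nonneg (be_b x h1 h2).1]; exact (be_b x h1 h2).2
  have al0 : al 0 = 0 := by simp [hal]
  have be0 : be 0 = 0 := by simp [hbe]
  have H_d : ∀ x, 0 ≤ x → x < 1 → HasDerivAt (fun y => F (al y))
      (D (al x) * (6 * x ^ 2 * (1 + x) ^ 2 / (1 + 2 * x) ^ 2)) x := fun x h1 h2 =>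
    (hF _ (al_a x h1 h2)).comp x (al_d x h1)
  have G_d : ∀ x, 0 ≤ x → x < 1 → HasDerivAt (fun y => F3 (be y))
      (D3 (be x) * (27 * x * (1 + x) * (1 + 2 * x) * (1 - x) * (2 + x) /
        (4 * (1 + x + x ^ 2) ^ 4))) x := fun x h1 h2 =>
    (hF3 _ (be_a x h1 h2)).comp x (be_d x h1)
  have Q_d : ∀ x, 0 ≤ x → x < 1 → HasDerivAt (fun y => al y * (1 - al y) * D (al y))
      (1 / 4 * F (al x) * (6 * x ^ 2 * (1 + x) ^ 2 / (1 + 2 * x) ^ 2)) x := fun x h1 h2 =>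
    (hQ _ (al_a x h1 h2)).comp x (al_d x h1)
  have Q3_d : ∀ x, 0 ≤ x → x < 1 → HasDerivAt (fun y => be y * (1 - be y) * D3 (be y))
      (2 / 9 * F3 (be x) * (27 * x * (1 + x) * (1 + 2 * x) * (1 - x) * (2 + x) /
        (4 * (1 + x + x ^ 2) ^ 4))) x := fun x h1 h2 =>
    (hQ3 _ (be_a x h1 h2)).comp x (be_d x h1)
  set Ar : ℝ → ℝ := fun x => -(x ^ 2 * (1 + x) ^ 2 * (2 + x) * (1 - x)) /
    (2 * ((1 + 2 * x) * (1 + x + x ^ 2))) with hAr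
  set w : ℝ → ℝ := fun x => 2 * (1 + x + x ^ 2) ^ 2 / (3 * (1 + 2 * x)) with hw
  have Ar_d : ∀ x, 0 ≤ x → HasDerivAt Ar
      ((-(2 * x * (1 + x) ^ 2 * (2 + x) * (1 - x) + 2 * x ^ 2 * (1 + x) * (2 + x) * (1 - x)
        + x ^ 2 * (1 + x) ^ 2 * (1 - x) - x ^ 2 * (1 + x) ^ 2 * (2 + x)) *
          ((1 + 2 * x) * (1 + x + x ^ 2)) +
        (x ^ 2 * (1 + x) ^ 2 * (2 + x) * (1 - x)) * (2 * (1 + x + x ^ 2) + (1 + 2 * x) ^ 2)) /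
        (2 * ((1 + 2 * x) * (1 + x + x ^ 2)) ^ 2)) x := by
    intro x hx
    have h1 : (2 * ((1 + 2 * x) * (1 + x + x ^ 2))) ≠ 0 := by positivity
    have := ((((((hasDerivAt_id x).pow 2).mul (((hasDerivAt_id x).const_add 1).pow 2)).mul
      ((hasDerivAt_id x).const_add 2)).mul ((hasDerivAt_id x).const_sub 1)).neg).div
      (((((hasDerivAt_id x).const_mul 2).const_add 1).mul
        (((hasDerivAt_id x).const_add 1).add ((hasDerivAt_id x).pow 2))).const_mul 2) h1
    refine HasDerivAt.congr_deriv this ?_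
    simp
    field_simp
    ring
  have w_d : ∀ x, 0 ≤ x → HasDerivAt w
      (4 * (1 + x + x ^ 2) * 3 * x * (1 + x) / (3 * (1 + 2 * x) ^ 2)) x := by
    intro x hx
    have h1 : (3 * (1 + 2 * x)) ≠ 0 := by positivity
    have := (((((hasDerivAt_id x).const_add 1).add ((hasDerivAt_id x).pow 2)).pow 2).const_mul
      2).div ((((hasDerivAt_id x).const_mul 2).const_add 1).const_mul 3) h1
    refine HasDerivAt.congr_deriv this ?_
    simp
    field_simp
    ring
  -- the Wronskian-like quantity
  set V : ℝ → ℝ := fun x => al x * (1 - al x) * D (al x) * F3 (be x) -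
    F (al x) * (Ar x * F3 (be x) + w x * (be x * (1 - be x) * D3 (be x))) with hV
  have uV_d : ∀ x, 0 ≤ x → x < 1 → HasDerivAt (fun y => u y * V y) 0 x := by
    intro x hx hx1
    have := (u_d x hx).mul (((Q_d x hx hx1).mul (G_d x hx hx1)).sub ((H_d x hx hx1).mul
      (((Ar_d x hx).mul (G_d x hx hx1)).add ((w_d x hx).mul (Q3_d x hx hx1)))))
    refine HasDerivAt.congr_deriv this ?_
    simp only [Pi.mul_apply, Pi.add_apply, Pi.sub_apply]
    generalize F (al x) = a1
    generalize D (al x) = a2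
    generalize F3 (be x) = a3
    generalize D3 (be x) = a4
    generalize u x = a5
    simp only [hal, hbe, hw, hAr]
    have h1 : (1 + 2 * x) ≠ 0 := by positivity
    have h2 : (1 + x + x ^ 2) ≠ 0 := by positivity
    field_simp
    ring
  have u_pos : ∀ x, 0 ≤ x → 0 < u x := fun x hx => by simp only [hu]; positivity
  have V0 : ∀ x, 0 < x → x < 1 → V x = 0 := by
    intro x hx hx1
    obtain ⟨y, hy, e⟩ := exists_hasDerivAt_eq_slope (fun y => u y * V y) (fun _ => 0) hx
      (fun z hz => (uV_d z hz.1 (hz.2.trans_lt hx1)).continuousAt.continuousWithinAt)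
      (fun z hz => uV_d z hz.1.le (hz.2.trans hx1))
    have e0 : V 0 = 0 := by simp [hV, al0, be0, hAr]
    simp only [e0, sub_zero, mul_zero] at e
    have : u x * V x = 0 := by
      field_simp at e
      linarith
    exact (mul_eq_zero.1 this).resolve_left (u_pos x hx.le).ne'
  have R_d : ∀ x, 0 ≤ x → x < 1 → HasDerivAt (fun y => u y * F3 (be y) / F (al y)) _ x :=
    fun x h1 h2 => ((u_d x h1).mul (G_d x h1 h2)).div (H_d x h1 h2)
      (by have := hpos _ (al_b x h1 h2).1 (al_b x h1 h2).2; positivity)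
  have R_d0 : ∀ x, 0 < x → x < 1 → HasDerivAt (fun y => u y * F3 (be y) / F (al y)) 0 x := by
    intro x h1 h2
    refine HasDerivAt.congr_deriv (R_d x h1.le h2) ?_
    have hv := V0 x h1 h2
    simp only [Pi.mul_apply]
    have h3 : F (al x) ≠ 0 := by
      have := hpos _ (al_b x h1.le h2).1 (al_b x h1.le h2).2; positivity
    revert hv h3
    simp only [hV]
    generalize F (al x) = a1
    generalize D (al x) = a2
    generalize F3 (be x) = a3
    generalize D3 (be x) = a4
    generalize u x = a5
    intro hv h3
    rw [div_eq_zero_iff]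
    left
    have h4 : x * (2 + x) * (1 - x) * (1 + x) / 6 ≠ 0 := by
      have : 0 < 1 - x := by linarith
      positivity
    apply (mul_eq_zero.1 _).resolve_left h4
    rw [← mul_zero (-a5), ← hv]
    simp only [hal, hbe, hw, hAr]
    have h5 : (1 + 2 * x) ≠ 0 := by positivity
    have h6 : (1 + x + x ^ 2) ≠ 0 := by positivity
    field_simp
    ring
  obtain ⟨y, hy, e⟩ := exists_hasDerivAt_eq_slope (fun y => u y * F3 (be y) / F (al y))
    (fun _ => 0) hp0
    (fun z hz => (R_d z hz.1 (hz.2.trans_lt hp1)).continuousAt.continuousWithinAt)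
    (fun z hz => R_d0 z hz.1 (hz.2.trans hp1))
  have h3 : F (al p) ≠ 0 := by
    have := hpos _ (al_b p hp0.le hp1).1 (al_b p hp0.le hp1).2; positivity
  have h7 : u p * F3 (be p) / F (al p) = 1 := by
    have u0 : u 0 = 1 := by simp [hu]
    simp only [al0, be0, u0, h0, h0', sub_zero] at e
    field_simp at e
    field_simp
    linarith
  have h8 : (1 + p + p ^ 2) ≠ 0 := by positivity
  simp only [hu] at h7
  field_simp at h7
  linarith

lemma half_coeff (n : ℕ) : (ascPochhammer ℝ n).eval (1 / 2) / (n.factorial : ℝ) =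
    ∏ i ∈ Finset.range n, (2 * (i : ℝ) + 1) / (2 * i + 2) := by
  induction n with
  | zero => simp
  | succ n ih =>
    rw [Finset.prod_range_succ, ← ih, ascPochhammer_succ_eval, Nat.factorial_succ]
    have : (n.factorial : ℝ) ≠ 0 := by positivity
    push_cast
    field_simp
    ring

lemma half_binom {y : ℝ} (hy : |y| < 1) :
    HasSum (fun n : ℕ => (ascPochhammer ℝ n).eval (1 / 2) / (n.factorial : ℝ) * y ^ n)
      (1 / (1 - y) ^ (1 / 2 : ℝ)) := by
  have h := (Real.one_div_one_sub_rpow_hasFPowerSeriesOnBall_zero (1 / 2)).hasSum (y := y)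
    (by simpa [enorm_eq_nnnorm] using! hy)
  simp only [zero_add] at h
  refine h.congr_fun ?_
  intro n
  have h1 : Ring.choose ((1 : ℝ) / 2 + n - 1) n =
      (ascPochhammer ℝ n).eval (1 / 2) / (n.factorial : ℝ) := by
    have h2 := Ring.factorial_nsmul_multichoose_eq_ascPochhammer (1 / 2 : ℝ) n
    rw [Polynomial.ascPochhammer_smeval_eq_eval, nsmul_eq_mul] at h2
    rw [Ring.choose, show (1 : ℝ) / 2 + n - 1 - n + 1 = 1 / 2 by ring, ← h2]
    have : (n.factorial : ℝ) ≠ 0 := by positivity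
    field_simp
  rw [← h1]
  simp [FormalMultilinearSeries.ofScalars]

lemma beta_trig : ∫ x in Set.Ioo 0 (π / 2), 1 / √(1 + cos x ^ 2) =
    1 / 4 * (Real.Gamma (1 / 4) * Real.Gamma (1 / 2) / Real.Gamma (3 / 4)) := by
  have h1 := ProbabilityTheory.beta_eq_betaIntegralReal (1 / 4) (1 / 2) (by norm_num) (by norm_num)
  have h2 : (Complex.betaIntegral ((1 / 4 : ℝ) : ℂ) ((1 / 2 : ℝ) : ℂ)) =
      ((∫ x in (0 : ℝ)..1, x ^ (-(3 / 4) : ℝ) * (1 - x) ^ (-(1 / 2) : ℝ) : ℝ) : ℂ) := by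
    rw [Complex.betaIntegral, ← intervalIntegral.integral_ofReal]
    apply intervalIntegral.integral_congr
    intro x hx
    rw [Set.uIcc_of_le zero_le_one] at hx
    simp only
    rw [Complex.ofReal_mul, Complex.ofReal_cpow hx.1, Complex.ofReal_cpow (by linarith [hx.2])]
    push_cast
    norm_num
  rw [h2, Complex.ofReal_re, ProbabilityTheory.beta] at h1
  norm_num at h1
  norm_num
  rw [h1, intervalIntegral.integral_of_le zero_le_one, MeasureTheory.integral_Ioc_eq_integral_Ioo]
  have him : (fun x => cos x ^ 4) '' Set.Ioo 0 (π / 2) = Set.Ioo 0 1 := by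
    ext y
    constructor
    · rintro ⟨x, hx, rfl⟩
      have h3 : 0 < cos x := cos_pos_of_mem_Ioo ⟨by linarith [hx.1, pi_pos], hx.2⟩
      have h4 : 0 < sin x := sin_pos_of_pos_of_lt_pi hx.1 (by linarith [hx.2, pi_pos])
      have h5 : cos x < 1 := by nlinarith [sin_sq_add_cos_sq x]
      exact ⟨by positivity, pow_lt_one₀ h3.le h5 (by norm_num)⟩
    · rintro ⟨hy0, hy1⟩
      refine ⟨arccos (√(√y)), ⟨?_, ?_⟩, ?_⟩
      · rw [arccos_pos, Real.sqrt_lt' one_pos, Real.sqrt_lt' (by norm_num)]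
        simpa using hy1
      · rw [arccos_lt_pi_div_two]; positivity
      · simp only
        rw [cos_arccos (by linarith [Real.sqrt_nonneg (√y)])
          (by rw [Real.sqrt_le_iff, and_iff_right zero_le_one, one_pow, Real.sqrt_le_iff, and_iff_right zero_le_one, one_pow]
              exact hy1.le)]
        rw [show (√√y) ^ 4 = ((√√y) ^ 2) ^ 2 by ring, Real.sq_sqrt (by positivity),
          Real.sq_sqrt hy0.le]
  have hinj : Set.InjOn (fun x => cos x ^ 4) (Set.Ioo 0 (π / 2)) := by
    intro x hx y hy hxy
    have h3 : 0 < cos x := cos_pos_of_mem_Ioo ⟨by linarith [hx.1, pi_pos], hx.2⟩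
    have h4 : 0 < cos y := cos_pos_of_mem_Ioo ⟨by linarith [hy.1, pi_pos], hy.2⟩
    have h5 : cos x = cos y := (pow_left_inj₀ h3.le h4.le (by norm_num)).1 hxy
    exact injOn_cos ⟨hx.1.le, by linarith [hx.2, pi_pos]⟩ ⟨hy.1.le, by linarith [hy.2, pi_pos]⟩ h5
  have hcv := MeasureTheory.integral_image_eq_integral_abs_deriv_smul (s := Set.Ioo 0 (π / 2))
    (f := fun x => cos x ^ 4) (f' := fun x => 4 * cos x ^ 3 * (- sin x)) measurableSet_Ioo
    (fun x _ => by
      have := ((hasDerivAt_cos x).pow 4).hasDerivWithinAt (s := Set.Ioo 0 (π / 2))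
      refine HasDerivWithinAt.congr_deriv this ?_
      norm_num) hinj
    (fun x => x ^ (-(3 / 4) : ℝ) * (1 - x) ^ (-(1 / 2) : ℝ))
  rw [him] at hcv
  rw [hcv, ← MeasureTheory.integral_const_mul]
  apply MeasureTheory.setIntegral_congr_fun measurableSet_Ioo
  intro x hx
  have h3 : 0 < cos x := cos_pos_of_mem_Ioo ⟨by linarith [hx.1, pi_pos], hx.2⟩
  have h4 : 0 < sin x := sin_pos_of_pos_of_lt_pi hx.1 (by linarith [hx.2, pi_pos])
  have e1 : (cos x ^ 4) ^ (-(3 / 4) : ℝ) = (cos x ^ 3)⁻¹ := by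
    rw [← Real.rpow_natCast, ← Real.rpow_mul h3.le, ← Real.rpow_natCast, ← Real.rpow_neg h3.le]
    norm_num
  have e2 : (1 - cos x ^ 4) ^ (-(1 / 2) : ℝ) = (sin x * √(1 + cos x ^ 2))⁻¹ := by
    have : 1 - cos x ^ 4 = sin x ^ 2 * (1 + cos x ^ 2) := by
      rw [sin_sq]; ring
    rw [this, Real.rpow_neg (by positivity), ← Real.sqrt_eq_rpow, Real.sqrt_mul (by positivity),
      Real.sqrt_sq h4.le]
  simp only [smul_eq_mul]
  rw [e1, e2, abs_mul, abs_neg, abs_of_pos h4, abs_of_pos (by positivity)]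
  have : 0 < √(1 + cos x ^ 2) := by positivity
  field_simp

lemma lemniscate (c : ℕ → ℝ) (hc : ∀ n, c n = (ascPochhammer ℝ n).eval (1 / 2) *
    (ascPochhammer ℝ n).eval (1 / 2) / (n.factorial : ℝ) ^ 2) :
    ∑' n, c n * (1 / 2 : ℝ) ^ n = Real.Gamma (1 / 4) ^ 2 / (2 * π * √π) := by
  set b : ℕ → ℝ := fun n => (ascPochhammer ℝ n).eval (1 / 2) / (n.factorial : ℝ) with hb
  have hb0 : ∀ n, 0 ≤ b n := fun n => by
    simp only [hb, half_coeff]; exact Finset.prod_nonneg fun i _ => by positivity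
  let f : ℕ → C(ℝ, ℝ) := fun n => ⟨fun x => b n * (sin x ^ 2 / 2) ^ n, by fun_prop⟩
  have hs : Summable fun n => b n * (1 / 2 : ℝ) ^ n :=
    (half_binom (y := 1 / 2) (by norm_num [abs_of_pos])).summable
  have hf := intervalIntegral.hasSum_intervalIntegral_of_summable_norm (a := 0) (b := π) (f := f)
    (by
      refine Summable.of_nonneg_of_le (fun _ => norm_nonneg _) (fun n => ?_) hs
      rw [ContinuousMap.norm_le _ (mul_nonneg (hb0 n) (by positivity))]
      intro x
      simp only [f, ContinuousMap.restrict_apply, ContinuousMap.coe_mk]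
      rw [norm_mul, norm_pow, Real.norm_of_nonneg (hb0 n), Real.norm_of_nonneg (by positivity)]
      have := sin_sq_le_one x
      gcongr
      exact hb0 n)
  have e1 : ∀ n, ∫ x in (0 : ℝ)..π, f n x = π * (c n * (1 / 2) ^ n) := by
    intro n
    simp only [f, ContinuousMap.coe_mk]
    have : ∀ x, b n * (sin x ^ 2 / 2) ^ n = b n * (1 / 2) ^ n * sin x ^ (2 * n) := fun x => by
      rw [div_pow, pow_mul, one_div_pow]; ring
    simp only [this]
    rw [intervalIntegral.integral_const_mul, integral_sin_pow_even, ← half_coeff, hc]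
    simp only [hb]
    ring
  have e2 : ∀ x, ∑' n, f n x = √2 * (1 / √(1 + cos x ^ 2)) := by
    intro x
    have := sin_sq_le_one x
    have h := (half_binom (y := sin x ^ 2 / 2)
      (by rw [abs_of_nonneg (by positivity)]; linarith)).tsum_eq
    have e : 1 - sin x ^ 2 / 2 = (1 + cos x ^ 2) / 2 := by rw [sin_sq]; ring
    rw [e, ← Real.sqrt_eq_rpow, Real.sqrt_div (by positivity)] at h
    rw [show ∑' n, f n x = _ from h]
    field_simp
  simp only [e1, e2] at hf
  have h3 := hf.tsum_eq
  rw [tsum_mul_left, intervalIntegral.integral_const_mul] at h3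
  have hcont : Continuous fun x => 1 / √(1 + cos x ^ 2) := by
    have : ∀ x, √(1 + cos x ^ 2) ≠ 0 := fun x => by positivity
    fun_prop (disch := assumption)
  have hii := fun a b => hcont.intervalIntegrable (μ := MeasureTheory.volume) a b
  have h4 : ∫ x in (0 : ℝ)..π, 1 / √(1 + cos x ^ 2) =
      2 * ∫ x in (0 : ℝ)..(π / 2), 1 / √(1 + cos x ^ 2) := by
    rw [← intervalIntegral.integral_add_adjacent_intervals (hii 0 (π / 2)) (hii (π / 2) π)]
    have := intervalIntegral.integral_comp_sub_left (a := 0) (b := π / 2)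
      (fun x => 1 / √(1 + cos x ^ 2)) π
    simp only [cos_pi_sub, neg_sq, sub_zero] at this
    rw [show π - π / 2 = π / 2 by ring] at this
    rw [← this]
    ring
  rw [h4, intervalIntegral.integral_of_le (by positivity),
    MeasureTheory.integral_Ioc_eq_integral_Ioo, beta_trig, Real.Gamma_one_half_eq] at h3
  have h5 := Real.Gamma_mul_Gamma_one_sub (1 / 4)
  rw [show π * (1 / 4) = π / 4 by ring, sin_pi_div_four, show (1 : ℝ) - 1 / 4 = 3 / 4 by norm_num]
    at h5
  have g1 : 0 < Real.Gamma (1 / 4) := Real.Gamma_pos_of_pos (by norm_num)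
  have g3 : Real.Gamma (3 / 4) = π / (√2 / 2) / Real.Gamma (1 / 4) := by
    field_simp
    field_simp at h5
    linarith
  rw [g3] at h3
  have hp : √π ^ 2 = π := Real.sq_sqrt pi_pos.le
  have h2' : √2 ^ 2 = 2 := Real.sq_sqrt (by norm_num)
  have hpp : 0 < √π := by positivity
  generalize ∑' n, c n * (1 / 2 : ℝ) ^ n = S at *
  generalize √π = q at *
  generalize Real.Gamma (1 / 4) = g at *
  have hpi := pi_pos
  have e : √2 * (2 * (1 / 4 * (g * q / (π / (√2 / 2) / g)))) = g ^ 2 * q / (2 * π) := by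
    field_simp
    rw [h2']
    ring
  rw [e] at h3
  rw [eq_div_iff (by positivity)] at h3 ⊢
  apply mul_right_cancel₀ hpp.ne'
  linear_combination h3 + 2 * π * S * hp

/-- Evaluation of ₂F₁(1/3,2/3;1;·) at the escape-point argument. -/
theorem escape_point_evaluation :
    hyp2F1 (1/3) (2/3) 1 (3 * Real.sqrt 3 / 4 * (Real.sqrt 3 - 1)) =
      (3 * Real.sqrt 3 / 2) ^ ((1:ℝ)/4) *
        (Real.sqrt (Real.sqrt 3 + 1) / (2 * π) ^ ((3:ℝ)/2)) *
        Real.Gamma (1/4) ^ 2 := by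
  obtain ⟨c, hc, -, hcc⟩ := cast_hyp (1 / 2) (1 / 2) (by norm_num) (by norm_num) (by norm_num)
  obtain ⟨c3, hc3, hval, -⟩ := cast_hyp (1 / 3) (2 / 3) (by norm_num) (by norm_num) (by norm_num)
  obtain ⟨F, D, hF, hF0, hFp, hFd, hFQ⟩ := hc.main
  obtain ⟨F3, D3, hF3, hF30, -, hF3d, hF3Q⟩ := hc3.main
  norm_num at hFQ hF3Q
  have hl := lemniscate c hcc
  rw [← hF] at hl
  rw [hval, ← hF3]
  set r := √3 with hr
  have hr0 : 0 < r := by positivity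
  have hr2 : r ^ 2 = 3 := Real.sq_sqrt (by norm_num)
  set t := √(3 + 2 * r) with ht
  have ht0 : 0 < t := by positivity
  have ht2 : t ^ 2 = 3 + 2 * r := Real.sq_sqrt (by positivity)
  have ht1 : 1 < t := by nlinarith
  have hr3 : r < 2 := by nlinarith
  have ht3 : t < 3 := by nlinarith
  have key := transform_aux hF0 hF30 hFp hFd (by norm_num; exact hFQ) hF3d
    (by norm_num; exact hF3Q) (p := (t - 1) / 2) (by linarith) (by linarith)
  have a1 : ((t - 1) / 2) ^ 3 * (2 + (t - 1) / 2) / (1 + 2 * ((t - 1) / 2)) = 1 / 2 := by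
    rw [show 1 + 2 * ((t - 1) / 2) = t by ring]
    field_simp
    have : t ^ 4 = 6 * t ^ 2 + 3 := by
      rw [show t ^ 4 = (t ^ 2) ^ 2 by ring, ht2]; linear_combination 4 * hr2
    linear_combination this
  have a2 : 1 + (t - 1) / 2 + ((t - 1) / 2) ^ 2 = (3 + r) / 2 := by
    linear_combination (1 / 4) * ht2
  have a3 : ((t - 1) / 2) ^ 2 * (1 + (t - 1) / 2) ^ 2 = ((1 + r) / 2) ^ 2 := by
    rw [← mul_pow, show (t - 1) / 2 * (1 + (t - 1) / 2) = (t ^ 2 - 1) / 4 by ring, ht2]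
    ring
  have a4 : 27 * ((t - 1) / 2) ^ 2 * (1 + (t - 1) / 2) ^ 2 / (4 * ((3 + r) / 2) ^ 3) =
      3 * r / 4 * (r - 1) := by
    rw [mul_assoc, a3, div_eq_iff (by positivity)]
    have r3 : r ^ 3 = 3 * r := by rw [pow_succ, hr2]
    have r4 : r ^ 4 = 9 := by rw [show r ^ 4 = (r ^ 2) ^ 2 by ring, hr2]; norm_num
    have r5 : r ^ 5 = 9 * r := by rw [pow_succ, r4]
    ring_nf
    rw [r5, r4, r3, hr2]
    ring
  rw [a1, a2, a4, show 1 + 2 * ((t - 1) / 2) = t by ring, hl] at key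
  have hst : 0 < √t := by positivity
  have e1 : F3 (3 * r / 4 * (r - 1)) =
      (3 + r) / 2 / √t * (Real.Gamma (1 / 4) ^ 2 / (2 * π * √π)) := by
    field_simp at key ⊢
    linarith
  have e2 : (2 * π) ^ ((3 : ℝ) / 2) = 2 * √2 * (π * √π) := by
    rw [show (3 : ℝ) / 2 = 1 + 1 / 2 by norm_num, Real.rpow_add (by positivity), Real.rpow_one,
      ← Real.sqrt_eq_rpow, Real.sqrt_mul (by norm_num)]
    ring
  have e3 : (3 * r / 2) ^ ((1 : ℝ) / 4) * √(r + 1) * √t = (3 + r) / 2 * √2 := by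
    refine (pow_left_inj₀ (by positivity) (by positivity) (n := 4) (by norm_num)).1 ?_
    have f1 : ((3 * r / 2) ^ ((1 : ℝ) / 4)) ^ 4 = 3 * r / 2 := by
      rw [← Real.rpow_natCast, ← Real.rpow_mul (by positivity)]
      norm_num
    have f2 : √(r + 1) ^ 4 = (r + 1) ^ 2 := by
      rw [show √(r + 1) ^ 4 = (√(r + 1) ^ 2) ^ 2 by ring, Real.sq_sqrt (by positivity)]
    have f3 : √t ^ 4 = t ^ 2 := by
      rw [show √t ^ 4 = (√t ^ 2) ^ 2 by ring, Real.sq_sqrt (by positivity)]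
    have f4 : √2 ^ 4 = 4 := by
      rw [show √2 ^ 4 = (√2 ^ 2) ^ 2 by ring, Real.sq_sqrt (by positivity)]; norm_num
    rw [mul_pow, mul_pow, mul_pow, f1, f2, f3, f4, ht2]
    have r3 : r ^ 3 = 3 * r := by rw [pow_succ, hr2]
    have r4 : r ^ 4 = 9 := by rw [show r ^ 4 = (r ^ 2) ^ 2 by ring, hr2]; norm_num
    ring_nf
    rw [r4, r3, hr2]
    ring
  have e4 : (3 * r / 2) ^ ((1 : ℝ) / 4) * √(r + 1) = (3 + r) / 2 * √2 / √t := by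
    rw [eq_div_iff hst.ne', e3]
  rw [e1, e2, ← mul_div_assoc ((3 * r / 2) ^ ((1 : ℝ) / 4)), e4]
  have : 0 < √2 := by positivity
  have := pi_pos
  have : 0 < √π := by positivity
  field_simp
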